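/- The Hausdorff moment problem is ill-posed of type I in the sense of Nashed: the operator A : L²(0,1) → ℓ², (Ax)ⱼ = ∫₀¹ t^{j−1}x(t)dt, has non-closed range and is non-compact (equivalently, its range contains an infinite-dimensional closed subspace). -/

import Mathlib

open MeasureTheory

/-!
The normalised indicators `eₖ` of the intervals `(1 - 2⁻ᵏ, 1 - 2⁻ᵏ⁻¹]` are orthonormal, yet their
images do not tend to zero: on such an interval `tʲ` stays comparable to `1` for about `2ᵏ` values
of `j`, which gives `‖A eₖ‖ ≥ 1/2`. Since `A eₖ` tends to zero weakly, a gliding hump argument picks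
a subsequence whose images are so nearly orthogonal that `A` is bounded below on its closed span.
The image of that span is a closed infinite-dimensional subspace of the range, and a compact
operator cannot be bounded below on an infinite-dimensional space.

By the Weierstrass theorem `A` is injective, so if its range were closed it would be bounded below.
But near `0` the moments decay fast: with `x` the indicator of `(0, h]` one has `‖x‖² = h`, while
`‖A x‖² ≤ h² / (1 - h²)`.
-/

open Filter Set
open scoped lp NNReal Topology

section Orthogonality

variable {𝕜 E F ι : Type*} [RCLike 𝕜]
  [NormedAddCommGroup E] [InnerProductSpace 𝕜 E] [NormedAddCommGroup F] [InnerProductSpace 𝕜 F]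

theorem orthonormal_inv_norm_smul {v : ι → E} (hv₀ : ∀ i, v i ≠ 0)
    (hv : Pairwise fun i j ↦ inner 𝕜 (v i) (v j) = 0) :
    Orthonormal 𝕜 fun i ↦ (‖v i‖⁻¹ : 𝕜) • v i :=
  ⟨fun i ↦ norm_smul_inv_norm (hv₀ i), fun i j hij ↦ by
    simp [inner_smul_left, inner_smul_right, hv hij]⟩

theorem tendsto_inner_orthonormal_zero {e : ℕ → E} (he : Orthonormal 𝕜 e) (x : E) :
    Tendsto (fun n ↦ inner 𝕜 x (e n)) atTop (𝓝 0) := by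
  have hsq : Tendsto (fun n ↦ ‖inner 𝕜 (e n) x‖ ^ 2) atTop (𝓝 0) :=
    (he.inner_products_summable x).tendsto_atTop_zero
  rw [tendsto_zero_iff_norm_tendsto_zero]
  simpa [norm_inner_symm, Real.sqrt_sq] using hsq.sqrt

theorem exists_strictMono_forall_lt {p : ℕ → ℕ → ℕ → ℕ → Prop}
    (h : ∀ i j m, ∀ᶠ n in atTop, p i j m n) :
    ∃ φ : ℕ → ℕ, StrictMono φ ∧ ∀ i j, i < j → p i j (φ i) (φ j) := by
  have hnext : ∀ j N, ∃ n > N, ∀ i ≤ j, ∀ m ≤ N, p i j m n := fun j N ↦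
    ((eventually_gt_atTop N).and <| (eventually_all_finite (finite_le_nat j)).2 fun i _ ↦
      (eventually_all_finite (finite_le_nat N)).2 fun m _ ↦ h i j m).exists
  choose next hlt hp using hnext
  let φ : ℕ → ℕ := fun n ↦ Nat.rec 0 (fun j N ↦ next (j + 1) N) n
  have hφ : StrictMono φ := strictMono_nat_of_lt_succ fun n ↦ hlt (n + 1) (φ n)
  refine ⟨φ, hφ, fun i j hij ↦ ?_⟩
  obtain ⟨j, rfl⟩ := Nat.exists_eq_add_one_of_ne_zero (Nat.ne_zero_of_lt hij)
  exact hp (j + 1) (φ j) i hij.le (φ i) (hφ.monotone (Nat.lt_succ_iff.1 hij))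

theorem exists_strictMono_pairwise_norm_inner_le {v : ℕ → F} {a : ℕ → ℝ} (ha : ∀ i, 0 < a i)
    (hv : ∀ m, Tendsto (fun n ↦ inner 𝕜 (v m) (v n)) atTop (𝓝 0)) :
    ∃ φ : ℕ → ℕ, StrictMono φ ∧
      Pairwise fun i j ↦ ‖inner 𝕜 (v (φ i)) (v (φ j))‖ ≤ a i * a j := by
  obtain ⟨φ, hφ, hle⟩ := exists_strictMono_forall_lt
    (p := fun i j m n ↦ ‖inner 𝕜 (v m) (v n)‖ ≤ a i * a j) fun i j m ↦
      (tendsto_zero_iff_norm_tendsto_zero.1 (hv m)).eventually_le_const (mul_pos (ha i) (ha j))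
  refine ⟨φ, hφ, fun i j hij ↦ ?_⟩
  rcases hij.lt_or_gt with hlt | hgt
  · exact hle i j hlt
  · rw [norm_inner_symm, mul_comm]
    exact hle j i hgt

theorem sub_mul_sum_sq_le_norm_sum_smul_sq {v : ι → F} {a : ι → ℝ} {γ : ℝ}
    (hγ : ∀ i, γ ≤ ‖v i‖ ^ 2) (ha : Pairwise fun i j ↦ ‖inner 𝕜 (v i) (v j)‖ ≤ a i * a j)
    (s : Finset ι) (c : ι → 𝕜) :
    (γ - ∑ i ∈ s, a i ^ 2) * ∑ i ∈ s, ‖c i‖ ^ 2 ≤ ‖∑ i ∈ s, c i • v i‖ ^ 2 := by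
  classical
  have hterm (i j : ι) : (if i = j then γ * ‖c i‖ ^ 2 else 0) - ‖c i‖ * a i * (‖c j‖ * a j) ≤
      RCLike.re (inner 𝕜 (c i • v i) (c j • v j)) := by
    split_ifs with hij
    · subst hij
      rw [inner_self_eq_norm_sq, norm_smul, mul_pow]
      nlinarith [mul_le_mul_of_nonneg_left (hγ i) (sq_nonneg ‖c i‖), sq_nonneg (‖c i‖ * a i)]
    · calc 0 - ‖c i‖ * a i * (‖c j‖ * a j) = -(‖c i‖ * (‖c j‖ * (a i * a j))) := by ring
        _ ≤ -‖inner 𝕜 (c i • v i) (c j • v j)‖ := by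
          rw [inner_smul_left, inner_smul_right, norm_mul, norm_mul, RCLike.norm_conj]
          gcongr -(_ * (_ * ?_))
          exact ha hij
        _ ≤ _ := neg_le_of_abs_le (RCLike.abs_re_le_norm _)
  have hcauchy := Finset.sum_mul_sq_le_sq_mul_sq s (‖c ·‖) a
  calc (γ - ∑ i ∈ s, a i ^ 2) * ∑ i ∈ s, ‖c i‖ ^ 2
      ≤ γ * ∑ i ∈ s, ‖c i‖ ^ 2 - (∑ i ∈ s, ‖c i‖ * a i) ^ 2 := by linarith
    _ = ∑ i ∈ s, ∑ j ∈ s,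
          ((if i = j then γ * ‖c i‖ ^ 2 else 0) - ‖c i‖ * a i * (‖c j‖ * a j)) := by
      rw [sq (∑ i ∈ s, ‖c i‖ * a i), Finset.sum_mul_sum]
      simp +contextual [Finset.mul_sum]
    _ ≤ ∑ i ∈ s, ∑ j ∈ s, RCLike.re (inner 𝕜 (c i • v i) (c j • v j)) := by
      gcongr with i _ j _
      exact hterm i j
    _ = ‖∑ i ∈ s, c i • v i‖ ^ 2 := by
      rw [← inner_self_eq_norm_sq (𝕜 := 𝕜), sum_inner, map_sum]
      simp only [inner_sum, map_sum]

end Orthogonality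

section SquareSummable

variable {𝕜 F ι : Type*} [RCLike 𝕜] [NormedAddCommGroup F] [NormedSpace 𝕜 F]

theorem hasSum_norm_sq_lp (x : ℓ²(ι, 𝕜)) : HasSum (fun i ↦ ‖x i‖ ^ 2) (‖x‖ ^ 2) := by
  simpa using lp.hasSum_norm (p := 2) (by simp) x

theorem not_finiteDimensional_lp [Infinite ι] : ¬ FiniteDimensional 𝕜 ℓ²(ι, 𝕜) := fun _ ↦
  let b : HilbertBasis ι 𝕜 ℓ²(ι, 𝕜) := default
  not_finite_iff_infinite.2 ‹_› b.orthonormal.linearIndependent.finite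

theorem mul_norm_sq_le_norm_map_sq [DecidableEq ι] {γ : ℝ} (T : ℓ²(ι, 𝕜) →L[𝕜] F)
    (hT : ∀ (s : Finset ι) (c : ι → 𝕜),
      γ * ∑ i ∈ s, ‖c i‖ ^ 2 ≤ ‖∑ i ∈ s, c i • T (lp.single 2 i 1)‖ ^ 2) (x : ℓ²(ι, 𝕜)) :
    γ * ‖x‖ ^ 2 ≤ ‖T x‖ ^ 2 := by
  have hTx : HasSum (fun i ↦ x i • T (lp.single 2 i 1)) (T x) := by
    simpa [← map_smul, ← lp.single_smul] using (lp.hasSum_single (by simp) x).mapL T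
  exact le_of_tendsto_of_tendsto' ((hasSum_norm_sq_lp x).const_mul γ) (hTx.norm.pow 2)
    fun s ↦ hT s x

end SquareSummable

section BoundedBelow

variable {𝕜 D E F : Type*} [NontriviallyNormedField 𝕜]
  [NormedAddCommGroup D] [NormedSpace 𝕜 D] [NormedAddCommGroup E] [NormedSpace 𝕜 E]
  [NormedAddCommGroup F] [NormedSpace 𝕜 F]

theorem antilipschitzWith_of_mul_norm_sq_le {γ : ℝ} (hγ : 0 < γ) (T : E →L[𝕜] F)
    (hT : ∀ x, γ * ‖x‖ ^ 2 ≤ ‖T x‖ ^ 2) : ∃ K, AntilipschitzWith K T := by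
  refine ⟨.mk (√γ)⁻¹ (by positivity), T.antilipschitz_of_bound fun x ↦ ?_⟩
  rw [NNReal.coe_mk, inv_mul_eq_div, le_div_iff₀' (Real.sqrt_pos.2 hγ)]
  refine le_of_sq_le_sq ?_ (norm_nonneg _)
  simpa [mul_pow, Real.sq_sqrt hγ.le] using hT x

variable [CompleteSpace D] {K : ℝ≥0}

theorem not_isCompactOperator_of_antilipschitzWith_comp [CompleteSpace 𝕜]
    (hD : ¬ FiniteDimensional 𝕜 D)
    {A : E →L[𝕜] F} {V : D →L[𝕜] E} (hAV : AntilipschitzWith K (A ∘L V)) :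
    ¬ IsCompactOperator A := by
  intro hA
  obtain ⟨C, hC, hCmem⟩ := hA.comp_clm V
  have hpre : IsCompact ((A ∘L V) ⁻¹' C) :=
    (hAV.isClosedEmbedding (A ∘L V).uniformContinuous).isCompact_preimage hC
  exact hD (.of_isCompactOperator_id ⟨_, hpre, hCmem⟩)

theorem exists_isClosed_le_range_of_antilipschitzWith_comp (hD : ¬ FiniteDimensional 𝕜 D)
    {A : E →L[𝕜] F} {V : D →L[𝕜] E} (hAV : AntilipschitzWith K (A ∘L V)) :
    ∃ Z : Submodule 𝕜 F, IsClosed (Z : Set F) ∧ ¬ FiniteDimensional 𝕜 Z ∧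
      Z ≤ LinearMap.range (A : E →ₗ[𝕜] F) := by
  refine ⟨LinearMap.range (A ∘L V : D →ₗ[𝕜] F), ?_, fun _ ↦ hD ?_, ?_⟩
  · exact hAV.isClosed_range (A ∘L V).uniformContinuous
  · exact (LinearEquiv.ofInjective (A ∘L V : D →ₗ[𝕜] F) hAV.injective).symm.finiteDimensional
  · exact LinearMap.range_comp_le_range (V : D →ₗ[𝕜] E) (A : E →ₗ[𝕜] F)

end BoundedBelow

theorem exists_linearIsometry_antilipschitzWith_comp {𝕜 E F : Type*} [RCLike 𝕜]
    [NormedAddCommGroup E] [InnerProductSpace 𝕜 E] [CompleteSpace E]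
    [NormedAddCommGroup F] [InnerProductSpace 𝕜 F] [CompleteSpace F]
    (A : E →L[𝕜] F) {e : ℕ → E} (he : Orthonormal 𝕜 e) {δ : ℝ} (hδ : 0 < δ)
    (hA : ∀ n, δ ≤ ‖A (e n)‖) :
    ∃ (V : ℓ²(ℕ, 𝕜) →ₗᵢ[𝕜] E) (K : ℝ≥0), AntilipschitzWith K (A ∘L V.toContinuousLinearMap) := by
  have hweak (m : ℕ) : Tendsto (fun n ↦ inner 𝕜 (A (e m)) (A (e n))) atTop (𝓝 0) := by
    simpa only [ContinuousLinearMap.adjoint_inner_left] using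
      tendsto_inner_orthonormal_zero he (A.adjoint (A (e m)))
  obtain ⟨b, hb, σ, hbσ, hσ⟩ := posSumOfEncodable (ε := δ ^ 2 / 2) (by positivity) ℕ
  obtain ⟨φ, hφ, hinner⟩ :=
    exists_strictMono_pairwise_norm_inner_le (fun i ↦ Real.sqrt_pos.2 (hb i)) hweak
  let V := (he.comp φ hφ.injective).orthogonalFamily.linearIsometry
  have hV (i : ℕ) : V (lp.single 2 i 1) = e (φ i) := by simp [V]
  refine ⟨V, antilipschitzWith_of_mul_norm_sq_le (half_pos (pow_pos hδ 2)) _ <|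
    mul_norm_sq_le_norm_map_sq _ fun s c ↦ ?_⟩
  have hsum : ∑ i ∈ s, √(b i) ^ 2 ≤ δ ^ 2 / 2 := by
    simp only [Real.sq_sqrt (hb _).le]
    exact (sum_le_hasSum s (fun i _ ↦ (hb i).le) hbσ).trans hσ
  calc δ ^ 2 / 2 * ∑ i ∈ s, ‖c i‖ ^ 2
      ≤ (δ ^ 2 - ∑ i ∈ s, √(b i) ^ 2) * ∑ i ∈ s, ‖c i‖ ^ 2 := by
        gcongr
        linarith
    _ ≤ ‖∑ i ∈ s, c i • A (e (φ i))‖ ^ 2 :=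
        sub_mul_sum_sq_le_norm_sum_smul_sq (fun i ↦ by gcongr; exact hA (φ i)) hinner s c
    _ = _ := by simp [hV]

section Geometric

variable {m q : ℝ}

theorem sq_div_one_sub_sq_le_norm_sq (hm : 0 ≤ m) (hq₀ : 0 ≤ q) (hq₁ : q < 1) {y : ℓ²(ℕ, ℝ)}
    (hy : ∀ j, m * q ^ j ≤ y j) : m ^ 2 / (1 - q ^ 2) ≤ ‖y‖ ^ 2 := by
  have hq : q ^ 2 < 1 := pow_lt_one₀ hq₀ hq₁ two_ne_zero
  refine hasSum_le (fun j ↦ ?_) ((hasSum_geometric_of_lt_one (sq_nonneg q) hq).mul_left (m ^ 2))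
    (hasSum_norm_sq_lp y)
  calc m ^ 2 * (q ^ 2) ^ j = (m * q ^ j) ^ 2 := by ring
    _ ≤ ‖y j‖ ^ 2 := by gcongr; exact (hy j).trans (le_abs_self _)

theorem norm_sq_le_sq_div_one_sub_sq (hq₀ : 0 ≤ q) (hq₁ : q < 1) {y : ℓ²(ℕ, ℝ)}
    (hy : ∀ j, ‖y j‖ ≤ m * q ^ j) : ‖y‖ ^ 2 ≤ m ^ 2 / (1 - q ^ 2) := by
  have hq : q ^ 2 < 1 := pow_lt_one₀ hq₀ hq₁ two_ne_zero
  refine hasSum_le (fun j ↦ ?_) (hasSum_norm_sq_lp y)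
    ((hasSum_geometric_of_lt_one (sq_nonneg q) hq).mul_left (m ^ 2))
  calc ‖y j‖ ^ 2 ≤ (m * q ^ j) ^ 2 := by gcongr; exact hy j
    _ = m ^ 2 * (q ^ 2) ^ j := by ring

end Geometric

section Determinacy

variable {E : Type*} [NormedAddCommGroup E] [NormedSpace ℝ E] {μ : Measure ℝ} {a b : ℝ} {f : ℝ → E}

theorem integrable_smul_of_continuous (hμ : ∀ᵐ t ∂μ, t ∈ Icc a b) (hf : Integrable f μ)
    {g : ℝ → ℝ} (hg : Continuous g) : Integrable (fun t ↦ g t • f t) μ := by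
  obtain ⟨C, hC⟩ := isCompact_Icc.exists_bound_of_continuousOn (s := Icc a b) hg.continuousOn
  exact hf.bdd_smul C hg.aestronglyMeasurable (hμ.mono hC)

theorem integral_eval_smul_eq_zero (hμ : ∀ᵐ t ∂μ, t ∈ Icc a b) (hf : Integrable f μ)
    (hmom : ∀ j : ℕ, ∫ t, t ^ j • f t ∂μ = 0) (p : Polynomial ℝ) :
    ∫ t, p.eval t • f t ∂μ = 0 := by
  induction p using Polynomial.induction_on' with
  | add p q hp hq =>
    simp only [Polynomial.eval_add, add_smul]
    rw [integral_add (integrable_smul_of_continuous hμ hf p.continuous)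
      (integrable_smul_of_continuous hμ hf q.continuous), hp, hq, add_zero]
  | monomial n c =>
    simp only [Polynomial.eval_monomial, mul_smul]
    rw [integral_smul, hmom, smul_zero]

theorem integral_smul_eq_zero_of_continuous (hμ : ∀ᵐ t ∂μ, t ∈ Icc a b) (hf : Integrable f μ)
    (hmom : ∀ j : ℕ, ∫ t, t ^ j • f t ∂μ = 0) {g : ℝ → ℝ} (hg : Continuous g) :
    ∫ t, g t • f t ∂μ = 0 := by
  have hbound : ∀ ε > 0, ‖∫ t, g t • f t ∂μ‖ ≤ ε * ∫ t, ‖f t‖ ∂μ := by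
    intro ε hε
    obtain ⟨p, hp⟩ := exists_polynomial_near_of_continuousOn a b g hg.continuousOn ε hε
    have hsub : ∫ t, g t • f t ∂μ = ∫ t, (g t - p.eval t) • f t ∂μ := by
      simp only [sub_smul]
      rw [integral_sub (integrable_smul_of_continuous hμ hf hg)
        (integrable_smul_of_continuous hμ hf p.continuous),
        integral_eval_smul_eq_zero hμ hf hmom, sub_zero]
    rw [hsub, ← integral_const_mul]
    refine norm_integral_le_of_norm_le (hf.norm.const_mul ε) (hμ.mono fun t ht ↦ ?_)
    rw [norm_smul, norm_sub_rev]
    gcongr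
    exact (hp t ht).le
  have hlim : Tendsto (fun ε ↦ ε * ∫ t, ‖f t‖ ∂μ) (𝓝[>] 0) (𝓝 0) :=
    tendsto_nhdsWithin_of_tendsto_nhds <| by
      simpa using (continuous_mul_const (∫ t, ‖f t‖ ∂μ)).tendsto (0 : ℝ)
  exact norm_le_zero_iff.1 (ge_of_tendsto hlim (eventually_mem_nhdsWithin.mono hbound))

theorem ae_eq_zero_of_forall_integral_pow_smul_eq_zero [CompleteSpace E]
    (hμ : ∀ᵐ t ∂μ, t ∈ Icc a b) (hf : Integrable f μ)
    (hmom : ∀ j : ℕ, ∫ t, t ^ j • f t ∂μ = 0) : f =ᵐ[μ] 0 :=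
  ae_eq_zero_of_integral_contDiff_smul_eq_zero hf.locallyIntegrable fun _ hg _ ↦
    integral_smul_eq_zero_of_continuous hμ hf hmom hg.continuous

end Determinacy

section IndicatorNorm

theorem norm_indicatorConstLp_one_sq {α : Type*} [MeasurableSpace α] {μ : Measure α} {s : Set α}
    (hs : MeasurableSet s) (hμs : μ s ≠ ⊤) :
    ‖(indicatorConstLp 2 hs hμs 1 : Lp ℝ 2 μ)‖ ^ 2 = μ.real s := by
  rw [← real_inner_self_eq_norm_sq, L2.real_inner_indicatorConstLp_one_indicatorConstLp_one,
    inter_self]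

theorem measureReal_restrict_Ioo_Ioc {a b : ℝ} (ha : 0 ≤ a) (hab : a ≤ b) (hb : b < 1) :
    (volume.restrict (Ioo (0:ℝ) 1)).real (Ioc a b) = b - a := by
  have hsub : Ioc a b ⊆ Ioo 0 1 := fun t ht ↦ ⟨ha.trans_lt ht.1, ht.2.trans_lt hb⟩
  rw [measureReal_restrict_apply measurableSet_Ioc, inter_eq_left.2 hsub,
    Real.volume_real_Ioc_of_le hab]

end IndicatorNorm

/-- The operator `A : L²(μ) → ℓ²` of the Hausdorff moment problem for a measure `μ` on `ℝ`,
as a predicate because the moments of `x` are square summable only for suitable `μ`. Moments are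
indexed from `0`, so that the entry `j` is the paper's `(Ax)ⱼ₊₁`. -/
def IsMomentOperator {μ : Measure ℝ} (A : Lp ℝ 2 μ →L[ℝ] ℓ²(ℕ, ℝ)) : Prop :=
  ∀ x j, A x j = ∫ t, t ^ j * x t ∂μ

namespace IsMomentOperator

variable {μ : Measure ℝ} {A : Lp ℝ 2 μ →L[ℝ] ℓ²(ℕ, ℝ)} {a b : ℝ} {s : Set ℝ}

theorem injective [IsFiniteMeasure μ] (hA : IsMomentOperator A) (hμ : ∀ᵐ t ∂μ, t ∈ Icc a b) :
    Function.Injective A := by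
  rw [injective_iff_map_eq_zero]
  intro x hx
  rw [Lp.eq_zero_iff_ae_eq_zero]
  refine ae_eq_zero_of_forall_integral_pow_smul_eq_zero hμ
    ((Lp.memLp x).integrable one_le_two) fun j ↦ ?_
  simp only [smul_eq_mul, ← hA x j, hx, lp.coeFn_zero, Pi.zero_apply]

theorem apply_indicatorConstLp_one (hA : IsMomentOperator A) (hs : MeasurableSet s)
    (hμs : μ s ≠ ⊤) (j : ℕ) : A (indicatorConstLp 2 hs hμs 1) j = ∫ t in s, t ^ j ∂μ := by
  rw [hA, ← integral_indicator hs]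
  refine integral_congr_ae ?_
  filter_upwards [indicatorConstLp_coeFn (p := 2) (hs := hs) (hμs := hμs) (c := (1 : ℝ))] with t ht
  by_cases hts : t ∈ s <;> simp [ht, hts]

theorem measureReal_mul_pow_le_apply (hA : IsMomentOperator A) (ha : 0 ≤ a) (hsab : s ⊆ Icc a b)
    (hs : MeasurableSet s) (hμs : μ s ≠ ⊤) (j : ℕ) :
    μ.real s * a ^ j ≤ A (indicatorConstLp 2 hs hμs 1) j := by
  rw [hA.apply_indicatorConstLp_one]
  refine setIntegral_ge_of_const_le hs hμs (fun t ht ↦ ?_) ?_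
  · exact pow_le_pow_left₀ ha (hsab ht).1 j
  · refine Measure.integrableOn_of_bounded (M := b ^ j) hμs
      (continuous_pow j).aestronglyMeasurable ((ae_restrict_mem hs).mono fun t ht ↦ ?_)
    rw [norm_pow, Real.norm_of_nonneg (ha.trans (hsab ht).1)]
    exact pow_le_pow_left₀ (ha.trans (hsab ht).1) (hsab ht).2 j

theorem norm_apply_le_measureReal_mul_pow (hA : IsMomentOperator A) (hsb : s ⊆ Icc 0 b)
    (hs : MeasurableSet s) (hμs : μ s ≠ ⊤) (j : ℕ) :
    ‖A (indicatorConstLp 2 hs hμs 1) j‖ ≤ μ.real s * b ^ j := by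
  rw [hA.apply_indicatorConstLp_one, mul_comm]
  refine norm_setIntegral_le_of_norm_le_const hμs.lt_top fun t ht ↦ ?_
  rw [norm_pow, Real.norm_of_nonneg (hsb ht).1]
  exact pow_le_pow_left₀ (hsb ht).1 (hsb ht).2 j

theorem measureReal_sq_div_le_norm_apply_sq (hA : IsMomentOperator A) (ha₀ : 0 ≤ a) (ha₁ : a < 1)
    (hsab : s ⊆ Icc a b) (hs : MeasurableSet s) (hμs : μ s ≠ ⊤) :
    μ.real s ^ 2 / (1 - a ^ 2) ≤ ‖A (indicatorConstLp 2 hs hμs 1)‖ ^ 2 :=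
  sq_div_one_sub_sq_le_norm_sq measureReal_nonneg ha₀ ha₁ <|
    hA.measureReal_mul_pow_le_apply ha₀ hsab hs hμs

theorem norm_apply_sq_le_measureReal_sq_div (hA : IsMomentOperator A) (hb₀ : 0 ≤ b) (hb₁ : b < 1)
    (hsb : s ⊆ Icc 0 b) (hs : MeasurableSet s) (hμs : μ s ≠ ⊤) :
    ‖A (indicatorConstLp 2 hs hμs 1)‖ ^ 2 ≤ μ.real s ^ 2 / (1 - b ^ 2) :=
  norm_sq_le_sq_div_one_sub_sq hb₀ hb₁ <| hA.norm_apply_le_measureReal_mul_pow hsb hs hμs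

theorem norm_indicatorConstLp_le_two_mul_norm_apply (hA : IsMomentOperator A) (ha₀ : 0 ≤ a)
    (ha₁ : a < 1) (hsab : s ⊆ Icc a b) (hs : MeasurableSet s) (hμs : μ s ≠ ⊤)
    (has : 1 - a ≤ 2 * μ.real s) :
    ‖(indicatorConstLp 2 hs hμs 1 : Lp ℝ 2 μ)‖ ≤ 2 * ‖A (indicatorConstLp 2 hs hμs 1)‖ := by
  refine le_of_sq_le_sq ?_ (by positivity)
  have hfactor : 1 - a ^ 2 ≤ 4 * μ.real s := calc
    1 - a ^ 2 = (1 - a) * (1 + a) := by ring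
    _ ≤ 2 * μ.real s * 2 := by gcongr; linarith
    _ = 4 * μ.real s := by ring
  calc ‖(indicatorConstLp 2 hs hμs 1 : Lp ℝ 2 μ)‖ ^ 2
      = μ.real s := norm_indicatorConstLp_one_sq hs hμs
    _ ≤ 2 ^ 2 * (μ.real s ^ 2 / (1 - a ^ 2)) := by
      rw [← mul_div_assoc, le_div_iff₀ (by nlinarith)]
      nlinarith [mul_le_mul_of_nonneg_left hfactor (measureReal_nonneg (μ := μ) (s := s))]
    _ ≤ 2 ^ 2 * ‖A (indicatorConstLp 2 hs hμs 1)‖ ^ 2 := by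
      gcongr
      exact hA.measureReal_sq_div_le_norm_apply_sq ha₀ ha₁ hsab hs hμs
    _ = (2 * ‖A (indicatorConstLp 2 hs hμs 1)‖) ^ 2 := by ring

variable {A : Lp ℝ 2 (volume.restrict (Ioo (0 : ℝ) 1)) →L[ℝ] ℓ²(ℕ, ℝ)}

theorem exists_orthonormal_le_norm_apply (hA : IsMomentOperator A) :
    ∃ e : ℕ → Lp ℝ 2 (volume.restrict (Ioo (0 : ℝ) 1)),
      Orthonormal ℝ e ∧ ∀ k, 1 / 2 ≤ ‖A (e k)‖ := by
  let d : ℕ → ℝ := fun k ↦ 1 - (1 / 2) ^ k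
  have hd : StrictMono d := fun k l hkl ↦
    sub_lt_sub_left (pow_lt_pow_right_of_lt_one₀ (by norm_num) (by norm_num) hkl) 1
  have hd₀ (k : ℕ) : 0 ≤ d k := sub_nonneg.2 (pow_le_one₀ (by norm_num) (by norm_num))
  have hd₁ (k : ℕ) : d k < 1 := sub_lt_self 1 (by positivity)
  let u : ℕ → Lp ℝ 2 (volume.restrict (Ioo (0 : ℝ) 1)) := fun k ↦
    indicatorConstLp 2 measurableSet_Ioc (measure_ne_top _ (Ioc (d k) (d (k + 1)))) 1
  have hμ (k : ℕ) :
      (volume.restrict (Ioo (0 : ℝ) 1)).real (Ioc (d k) (d (k + 1))) = d (k + 1) - d k :=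
    measureReal_restrict_Ioo_Ioc (hd₀ k) (hd k.lt_succ_self).le (hd₁ _)
  have hu₀ (k : ℕ) : u k ≠ 0 := by
    rw [← norm_ne_zero_iff, ← sq_pos_iff, norm_indicatorConstLp_one_sq, hμ]
    exact sub_pos.2 (hd k.lt_succ_self)
  have hu : Pairwise fun k l ↦ inner ℝ (u k) (u l) = 0 := by
    intro k l hkl
    have hdisj : Disjoint (Ioc (d k) (d (k + 1))) (Ioc (d l) (d (l + 1))) :=
      hd.monotone.pairwise_disjoint_on_Ioc_succ hkl
    rw [L2.real_inner_indicatorConstLp_one_indicatorConstLp_one, hdisj.inter_eq,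
      measureReal_empty]
  refine ⟨_, orthonormal_inv_norm_smul hu₀ hu, fun k ↦ ?_⟩
  have hle : ‖u k‖ ≤ 2 * ‖A (u k)‖ := by
    refine hA.norm_indicatorConstLp_le_two_mul_norm_apply (hd₀ k) (hd₁ k) Ioc_subset_Icc_self _ _ ?_
    rw [hμ]
    simp only [d, pow_succ]
    linarith
  rw [map_smul, norm_smul, norm_inv, RCLike.norm_ofReal, abs_norm, inv_mul_eq_div,
    le_div_iff₀ (norm_pos_iff.2 (hu₀ k))]
  linarith

theorem not_antilipschitzWith (hA : IsMomentOperator A) (K : ℝ≥0) : ¬ AntilipschitzWith K A := by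
  intro hK
  let h : ℝ := 1 / (2 * (K ^ 2 + 1))
  have hh₀ : 0 < h := by positivity
  have hhK : h * (2 * (K ^ 2 + 1)) = 1 := one_div_mul_cancel (by positivity)
  have hh₁ : h < 1 := by nlinarith [sq_nonneg (K : ℝ)]
  have hμ : (volume.restrict (Ioo (0 : ℝ) 1)).real (Ioc 0 h) = h := by
    rw [measureReal_restrict_Ioo_Ioc le_rfl hh₀.le hh₁, sub_zero]
  let x : Lp ℝ 2 (volume.restrict (Ioo (0 : ℝ) 1)) :=
    indicatorConstLp 2 measurableSet_Ioc (measure_ne_top _ (Ioc 0 h)) 1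
  have hx : ‖x‖ ^ 2 = h := by rw [norm_indicatorConstLp_one_sq, hμ]
  have hAx : ‖A x‖ ^ 2 ≤ h ^ 2 / (1 - h ^ 2) := by
    simpa only [hμ] using hA.norm_apply_sq_le_measureReal_sq_div hh₀.le hh₁ Ioc_subset_Icc_self
      measurableSet_Ioc (measure_ne_top _ (Ioc 0 h))
  have hle : h ≤ K ^ 2 * h ^ 2 / (1 - h ^ 2) := calc
    h = ‖x‖ ^ 2 := hx.symm
    _ ≤ (K * ‖A x‖) ^ 2 := by gcongr; exact A.bound_of_antilipschitz hK x
    _ = K ^ 2 * ‖A x‖ ^ 2 := mul_pow ..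
    _ ≤ K ^ 2 * (h ^ 2 / (1 - h ^ 2)) := by gcongr
    _ = K ^ 2 * h ^ 2 / (1 - h ^ 2) := (mul_div_assoc ..).symm
  have hmul : h * (1 - h ^ 2) ≤ h * (K ^ 2 * h) := by
    rw [le_div_iff₀ (by nlinarith)] at hle
    linarith
  nlinarith [le_of_mul_le_mul_left hmul hh₀]

theorem not_isClosed_range (hA : IsMomentOperator A) :
    ¬ IsClosed (LinearMap.range (A : Lp ℝ 2 (volume.restrict (Ioo (0 : ℝ) 1)) →ₗ[ℝ] ℓ²(ℕ, ℝ)) :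
      Set ℓ²(ℕ, ℝ)) := by
  intro hclosed
  have hsupp : ∀ᵐ t ∂volume.restrict (Ioo (0 : ℝ) 1), t ∈ Icc (0 : ℝ) 1 :=
    (ae_restrict_mem measurableSet_Ioo).mono fun _ ht ↦ Ioo_subset_Icc_self ht
  obtain ⟨K, hK⟩ :=
    A.antilipschitz_of_injective_of_isClosed_range (hA.injective hsupp) hclosed
  exact hA.not_antilipschitzWith K hK

end IsMomentOperator

/-- The Hausdorff moment problem is ill-posed of type I in the sense of Nashed:
the moment operator `A : L²(0,1) → ℓ²` has non-closed range, is non-compact, and its range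
contains an infinite-dimensional closed subspace. -/
theorem stmt8
    (A : Lp ℝ 2 (volume.restrict (Set.Ioo (0:ℝ) 1)) →L[ℝ] lp (fun _ : ℕ => ℝ) 2)
    (hA : ∀ (x : Lp ℝ 2 (volume.restrict (Set.Ioo (0:ℝ) 1))) (j : ℕ),
      (A x : ℕ → ℝ) j = ∫ t in Set.Ioo (0:ℝ) 1, t ^ j * x t) :
    ¬ IsClosed ((LinearMap.range (A : Lp ℝ 2 (volume.restrict (Set.Ioo (0:ℝ) 1)) →ₗ[ℝ]
        lp (fun _ : ℕ => ℝ) 2) : Submodule ℝ (lp (fun _ : ℕ => ℝ) 2)) :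
          Set (lp (fun _ : ℕ => ℝ) 2)) ∧
    ¬ IsCompactOperator (A : Lp ℝ 2 (volume.restrict (Set.Ioo (0:ℝ) 1)) →
        lp (fun _ : ℕ => ℝ) 2) ∧
    ∃ Z : Submodule ℝ (lp (fun _ : ℕ => ℝ) 2), IsClosed (Z : Set (lp (fun _ : ℕ => ℝ) 2)) ∧
      ¬ FiniteDimensional ℝ Z ∧
      Z ≤ LinearMap.range (A : Lp ℝ 2 (volume.restrict (Set.Ioo (0:ℝ) 1)) →ₗ[ℝ]
        lp (fun _ : ℕ => ℝ) 2) := by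
  replace hA : IsMomentOperator A := hA
  obtain ⟨e, he, hAe⟩ := hA.exists_orthonormal_le_norm_apply
  obtain ⟨V, K, hAV⟩ := exists_linearIsometry_antilipschitzWith_comp A he one_half_pos hAe
  exact ⟨hA.not_isClosed_range,
    not_isCompactOperator_of_antilipschitzWith_comp not_finiteDimensional_lp hAV,
    exists_isClosed_le_range_of_antilipschitzWith_comp not_finiteDimensional_lp hAV⟩
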